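/- Let (X₁, X₂) be bivariate normal with non-degenerate benchmark Y = α₁X₁ + α₂X₂. For any 0 ≤ a < b ≤ 1 and A = A(a,b), the conditional covariance satisfies: Cov[X₁, X₂ | Y ∈ A] = r + (Cov(Y, X₁)·Cov(Y, X₂)/Var(Y))·(λ_{A,2} − λ_{A,1}² − 1). -/

import Mathlib

open MeasureTheory ProbabilityTheory Filter Set

noncomputable section

/-- Covariance of two real random variables under the measure `m`. -/
def covar {Ω : Type*} [MeasurableSpace Ω] (m : Measure Ω) (f g : Ω → ℝ) : ℝ :=
  ∫ ω, (f ω - ∫ x, f x ∂m) * (g ω - ∫ x, g x ∂m) ∂m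

/-- Generalized inverse of the CDF of a measure on `ℝ`, `F⁻¹(p) = inf {y | F(y) ≥ p}`,
with values in `EReal` (`⊥` at `p = 0` and `⊤` at `p = 1` for fully supported laws). -/
def invCDF (μ : Measure ℝ) (p : ℝ) : EReal :=
  sInf ((fun x : ℝ => (x : EReal)) '' {x : ℝ | p ≤ cdf μ x})

/-- Quantile conditioning set `A(a,b) = {y : F⁻¹(a) < y < F⁻¹(b)}`. -/
def qSet (μ : Measure ℝ) (a b : ℝ) : Set ℝ :=
  {y : ℝ | invCDF μ a < (y : EReal) ∧ (y : EReal) < invCDF μ b}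

/-- `λ_{A,1} = E[V | V ∈ A_V]`, the first conditional moment of a standard normal on the
quantile set `A_V = (Φ⁻¹(a), Φ⁻¹(b))`. -/
def lambdaA1 (a b : ℝ) : ℝ :=
  ∫ x, x ∂((gaussianReal 0 1)[|qSet (gaussianReal 0 1) a b])

/-- `λ_{A,2} = E[V² | V ∈ A_V]`, the second conditional moment of a standard normal on the
quantile set `A_V = (Φ⁻¹(a), Φ⁻¹(b))`. -/
def lambdaA2 (a b : ℝ) : ℝ :=
  ∫ x, x ^ 2 ∂((gaussianReal 0 1)[|qSet (gaussianReal 0 1) a b])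

/-!
If `(X₁, X₂, Y)` is jointly Gaussian, the residuals `Xᵢ - Cov(Y, Xᵢ) / Var(Y) * Y` are uncorrelated
with `Y`, hence independent of it. Conditioning on `Y ∈ A` therefore leaves the covariance of the
residuals unchanged and keeps them uncorrelated with `Y`, so that the covariance of `X₁` and `X₂`
changes only through the variance of `Y`. That variance is computed by standardising: an increasing
affine map carries quantile sets to quantile sets.
-/

open scoped Topology

section Conditioning

variable {Ω E F : Type*} [MeasurableSpace Ω] [MeasurableSpace E] [MeasurableSpace F]
  {P : Measure Ω} {W : Ω → E} {Y : Ω → F} {B : Set F}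

theorem map_cond_preimage (hY : AEMeasurable Y P) (hB : MeasurableSet B) :
    (P[|Y ⁻¹' B]).map Y = (P.map Y)[|B] := by
  rw [ProbabilityTheory.cond, ProbabilityTheory.cond, Measure.map_smul,
    Measure.map_apply_of_aemeasurable hY hB, Measure.restrict_map_of_aemeasurable hY hB]

theorem memLp_cond {G : Type*} [NormedAddCommGroup G] {f : Ω → G} {p : ENNReal}
    (hf : MemLp f p P) {s : Set Ω} (hs : P s ≠ 0) : MemLp f p (P[|s]) :=
  (hf.restrict s).smul_measure (ENNReal.inv_ne_top.2 hs)

theorem cond_univ_prod (μ : Measure E) [IsProbabilityMeasure μ] (ν : Measure F) [SFinite ν]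
    (B : Set F) : (μ.prod ν)[|univ ×ˢ B] = μ.prod (ν[|B]) := by
  rw [ProbabilityTheory.cond, ProbabilityTheory.cond, Measure.prod_prod, measure_univ, one_mul,
    ← Measure.prod_restrict, Measure.restrict_univ, Measure.prod_smul_right]

variable [IsProbabilityMeasure P]

theorem map_prodMk_cond_preimage_of_indepFun (h : W ⟂ᵢ[P] Y) (hW : AEMeasurable W P)
    (hY : AEMeasurable Y P) (hB : MeasurableSet B) :
    (P[|Y ⁻¹' B]).map (fun ω => (W ω, Y ω)) = (P.map W).prod ((P.map Y)[|B]) := by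
  have := Measure.isProbabilityMeasure_map hW
  have hpre : Y ⁻¹' B = (fun ω => (W ω, Y ω)) ⁻¹' (univ ×ˢ B) := by ext; simp
  rw [hpre, map_cond_preimage (hW.prodMk hY) (MeasurableSet.univ.prod hB),
    (indepFun_iff_map_prod_eq_prod_map_map hW hY).1 h, cond_univ_prod]

theorem map_cond_preimage_of_indepFun (h : W ⟂ᵢ[P] Y) (hW : AEMeasurable W P)
    (hY : AEMeasurable Y P) (hB : MeasurableSet B) (hpos : P (Y ⁻¹' B) ≠ 0) :
    (P[|Y ⁻¹' B]).map W = P.map W := by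
  have hQ : P[|Y ⁻¹' B] ≪ P := cond_absolutelyContinuous
  have := cond_isProbabilityMeasure hpos
  have hmass : ((P.map Y)[|B]) univ = 1 := by
    have := Measure.isProbabilityMeasure_map (hY.mono_ac hQ)
    rw [← map_cond_preimage hY hB, measure_univ]
  have hfst : (P[|Y ⁻¹' B]).map W = ((P[|Y ⁻¹' B]).map fun ω => (W ω, Y ω)).map Prod.fst :=
    (AEMeasurable.map_map_of_aemeasurable measurable_fst.aemeasurable
      ((hW.prodMk hY).mono_ac hQ)).symm
  rw [hfst, map_prodMk_cond_preimage_of_indepFun h hW hY hB, Measure.map_fst_prod, hmass, one_smul]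

theorem indepFun_cond_preimage (h : W ⟂ᵢ[P] Y) (hW : AEMeasurable W P)
    (hY : AEMeasurable Y P) (hB : MeasurableSet B) (hpos : P (Y ⁻¹' B) ≠ 0) :
    W ⟂ᵢ[P[|Y ⁻¹' B]] Y := by
  have hQ : P[|Y ⁻¹' B] ≪ P := cond_absolutelyContinuous
  have := cond_isProbabilityMeasure hpos
  rw [indepFun_iff_map_prod_eq_prod_map_map (hW.mono_ac hQ) (hY.mono_ac hQ),
    map_prodMk_cond_preimage_of_indepFun h hW hY hB, map_cond_preimage_of_indepFun h hW hY hB hpos,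
    map_cond_preimage hY hB]

end Conditioning

theorem invCDF_lt_coe_iff {μ : Measure ℝ} {p y : ℝ} :
    invCDF μ p < (y : EReal) ↔ ∃ x < y, p ≤ cdf μ x := by
  simp [invCDF, sInf_lt_iff, and_comm]

theorem coe_lt_invCDF_iff {μ : Measure ℝ} {p y : ℝ} :
    (y : EReal) < invCDF μ p ↔ ∃ z > y, cdf μ z < p := by
  constructor
  · intro hy
    obtain ⟨z, hyz, hz⟩ := EReal.lt_iff_exists_real_btwn.1 hy
    refine ⟨z, EReal.coe_lt_coe_iff.1 hyz, ?_⟩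
    by_contra! hp
    exact hz.not_ge (sInf_le ⟨z, hp, rfl⟩)
  · rintro ⟨z, hyz, hz⟩
    refine (EReal.coe_lt_coe_iff.2 hyz).trans_le (le_sInf ?_)
    rintro _ ⟨x, hx, rfl⟩
    exact EReal.coe_le_coe_iff.2 ((monotone_cdf μ).reflect_lt (hz.trans_le hx)).le

theorem mem_qSet_iff {μ : Measure ℝ} {a b y : ℝ} :
    y ∈ qSet μ a b ↔ (∃ x < y, a ≤ cdf μ x) ∧ ∃ z > y, cdf μ z < b :=
  and_congr invCDF_lt_coe_iff coe_lt_invCDF_iff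

theorem measurableSet_qSet (μ : Measure ℝ) (a b : ℝ) : MeasurableSet (qSet μ a b) :=
  measurable_coe_real_ereal measurableSet_Ioo

theorem continuous_cdf (μ : Measure ℝ) [IsProbabilityMeasure μ] [NullSingletonClass μ] :
    Continuous (cdf μ) := by
  refine continuous_iff_continuousAt.2 fun x => ?_
  rw [(monotone_cdf μ).continuousAt_iff_leftLim_eq_rightLim, StieltjesFunction.rightLim_eq]
  refine le_antisymm ((monotone_cdf μ).leftLim_le le_rfl) ?_
  have hjump := (cdf μ).measure_singleton x
  rw [measure_cdf, measure_singleton] at hjump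
  exact sub_nonpos.1 (ENNReal.ofReal_eq_zero.1 hjump.symm)

theorem exists_cdf_eq (μ : Measure ℝ) [IsProbabilityMeasure μ] [NullSingletonClass μ] {p : ℝ}
    (hp : p ∈ Ioo 0 1) : ∃ x, cdf μ x = p :=
  mem_range_of_exists_le_of_exists_ge (continuous_cdf μ)
    (((tendsto_cdf_atBot μ).eventually_lt_const hp.1).exists.imp fun _ => le_of_lt)
    (((tendsto_cdf_atTop μ).eventually_const_lt hp.2).exists.imp fun _ => le_of_lt)

theorem cdf_preimage_Ioo_subset_qSet (μ : Measure ℝ) [IsProbabilityMeasure μ]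
    [NullSingletonClass μ] (a b : ℝ) : cdf μ ⁻¹' Ioo a b ⊆ qSet μ a b := by
  intro y hy
  have hlim : Tendsto (cdf μ) (𝓝 y) (𝓝 (cdf μ y)) := (continuous_cdf μ).tendsto y
  obtain ⟨x, hax, hxy⟩ := (((hlim.mono_left nhdsWithin_le_nhds).eventually_const_lt hy.1).and
    (self_mem_nhdsWithin (s := Iio y))).exists
  obtain ⟨z, hzb, hyz⟩ := (((hlim.mono_left nhdsWithin_le_nhds).eventually_lt_const hy.2).and
    (self_mem_nhdsWithin (s := Ioi y))).exists
  exact mem_qSet_iff.2 ⟨⟨x, hxy, hax.le⟩, z, hyz, hzb⟩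

theorem measure_qSet_pos (μ : Measure ℝ) [IsProbabilityMeasure μ] [NullSingletonClass μ]
    {a b : ℝ} (ha : 0 ≤ a) (hab : a < b) (hb : b ≤ 1) : 0 < μ (qSet μ a b) := by
  obtain ⟨p, hap, hpb⟩ := exists_between hab
  obtain ⟨q, hpq, hqb⟩ := exists_between hpb
  obtain ⟨x, rfl⟩ := exists_cdf_eq μ ⟨ha.trans_lt hap, hpb.trans_le hb⟩
  obtain ⟨y, rfl⟩ := exists_cdf_eq μ ⟨ha.trans_lt (hap.trans hpq), hqb.trans_le hb⟩
  have hIoc : Ioc x y ⊆ qSet μ a b := fun t ht => cdf_preimage_Ioo_subset_qSet μ a b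
    ⟨hap.trans_le (monotone_cdf μ ht.1.le), (monotone_cdf μ ht.2).trans_lt hqb⟩
  calc 0 < ENNReal.ofReal (cdf μ y - cdf μ x) := ENNReal.ofReal_pos.2 (sub_pos.2 hpq)
    _ = μ (Ioc x y) := by rw [← StieltjesFunction.measure_Ioc, measure_cdf]
    _ ≤ μ (qSet μ a b) := measure_mono hIoc

theorem cdf_map_orderIso (μ : Measure ℝ) [IsProbabilityMeasure μ] (e : ℝ ≃o ℝ) (x : ℝ) :
    cdf (μ.map e) (e x) = cdf μ x := by
  have he : Measurable e := e.continuous.measurable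
  have := Measure.isProbabilityMeasure_map (μ := μ) he.aemeasurable
  rw [cdf_eq_real, cdf_eq_real, map_measureReal_apply he measurableSet_Iic, e.preimage_Iic,
    e.symm_apply_apply]

theorem preimage_qSet_map_orderIso (μ : Measure ℝ) [IsProbabilityMeasure μ] (e : ℝ ≃o ℝ)
    (a b : ℝ) : e ⁻¹' qSet (μ.map e) a b = qSet μ a b := by
  ext y
  rw [mem_preimage, mem_qSet_iff, mem_qSet_iff]
  refine and_congr (e.surjective.exists.trans ?_) (e.surjective.exists.trans ?_) <;>
    simp only [cdf_map_orderIso, gt_iff_lt, e.lt_iff_lt]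

theorem cond_qSet_map_orderIso (μ : Measure ℝ) [IsProbabilityMeasure μ] (e : ℝ ≃o ℝ) (a b : ℝ) :
    (μ.map e)[|qSet (μ.map e) a b] = (μ[|qSet μ a b]).map e := by
  rw [← map_cond_preimage e.continuous.aemeasurable (measurableSet_qSet _ a b),
    preimage_qSet_map_orderIso]

section Regression

variable {Ω : Type*} [MeasurableSpace Ω] {P : Measure Ω} {X X₁ X₂ Y : Ω → ℝ}

/-- The residual of the linear regression of `X` on `Y` under `P`. No intercept is subtracted:
constants do not affect covariances. -/
def regressionResidual (P : Measure Ω) (X Y : Ω → ℝ) (ω : Ω) : ℝ :=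
  X ω - cov[Y, X; P] / Var[Y; P] * Y ω

theorem regressionResidual_add (P : Measure Ω) (X Y : Ω → ℝ) :
    (regressionResidual P X Y + fun ω => cov[Y, X; P] / Var[Y; P] * Y ω) = X :=
  funext fun _ => sub_add_cancel _ _

theorem memLp_regressionResidual {Q : Measure Ω} {p : ENNReal} (hX : MemLp X p Q)
    (hY : MemLp Y p Q) : MemLp (regressionResidual P X Y) p Q :=
  hX.sub (hY.const_mul _)

theorem covariance_regressionResidual_left [IsFiniteMeasure P] (hX : MemLp X 2 P)
    (hY : MemLp Y 2 P) (hvar : Var[Y; P] ≠ 0) : cov[regressionResidual P X Y, Y; P] = 0 := by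
  unfold regressionResidual
  rw [covariance_fun_sub_left hX (hY.const_mul _) hY, covariance_const_mul_left,
    covariance_self hY.aemeasurable, div_mul_cancel₀ _ hvar, covariance_comm, sub_self]

theorem covariance_eq_covariance_regressionResidual_add {Q : Measure Ω} [IsFiniteMeasure Q]
    (hX₁ : MemLp X₁ 2 Q) (hX₂ : MemLp X₂ 2 Q) (hY : MemLp Y 2 Q)
    (h₁ : cov[regressionResidual P X₁ Y, Y; Q] = 0)
    (h₂ : cov[regressionResidual P X₂ Y, Y; Q] = 0) :
    cov[X₁, X₂; Q] = cov[regressionResidual P X₁ Y, regressionResidual P X₂ Y; Q]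
      + cov[Y, X₁; P] / Var[Y; P] * (cov[Y, X₂; P] / Var[Y; P]) * Var[Y; Q] := by
  have hW₁ := memLp_regressionResidual (P := P) hX₁ hY
  have hW₂ := memLp_regressionResidual (P := P) hX₂ hY
  have hY₁ := hY.const_mul (cov[Y, X₁; P] / Var[Y; P])
  have hY₂ := hY.const_mul (cov[Y, X₂; P] / Var[Y; P])
  conv_lhs => rw [← regressionResidual_add P X₁ Y, ← regressionResidual_add P X₂ Y]
  rw [covariance_add_left hW₁ hY₁ (hW₂.add hY₂), covariance_add_right hW₁ hW₂ hY₂,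
    covariance_add_right hY₁ hW₂ hY₂, covariance_const_mul_right, covariance_const_mul_left,
    covariance_const_mul_left, covariance_const_mul_right,
    covariance_comm Y (regressionResidual P X₂ Y), h₁, h₂, covariance_self hY.aemeasurable]
  ring

theorem covariance_eq_of_map_prodMk_eq {Q : Measure Ω}
    (hP : AEMeasurable (fun ω => (X₁ ω, X₂ ω)) P) (hQ : AEMeasurable (fun ω => (X₁ ω, X₂ ω)) Q)
    (h : P.map (fun ω => (X₁ ω, X₂ ω)) = Q.map fun ω => (X₁ ω, X₂ ω)) :
    cov[X₁, X₂; P] = cov[X₁, X₂; Q] := by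
  have hmap {R : Measure Ω} (hR : AEMeasurable (fun ω => (X₁ ω, X₂ ω)) R) :
      cov[X₁, X₂; R] = cov[Prod.fst, Prod.snd; R.map fun ω => (X₁ ω, X₂ ω)] :=
    (covariance_map (X := Prod.fst) (Y := Prod.snd) (by fun_prop) (by fun_prop) hR).symm
  rw [hmap hP, hmap hQ, h]

theorem strongDual_real_prod_apply (L : StrongDual ℝ (ℝ × ℝ)) (x y : ℝ) :
    L (x, y) = L (1, 0) * x + L (0, 1) * y := by
  have hxy : (x, y) = x • ((1 : ℝ), (0 : ℝ)) + y • ((0 : ℝ), (1 : ℝ)) := by simp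
  rw [hxy, map_add, map_smul, map_smul, smul_eq_mul, smul_eq_mul, mul_comm x, mul_comm y]

theorem indepFun_regressionResidual_prodMk
    (h : HasGaussianLaw (fun ω => ((X₁ ω, X₂ ω), Y ω)) P) (hvar : Var[Y; P] ≠ 0) :
    (fun ω => (regressionResidual P X₁ Y ω, regressionResidual P X₂ Y ω)) ⟂ᵢ[P] Y := by
  have := h.isProbabilityMeasure
  have hX₁ := h.fst.fst.memLp_two
  have hX₂ := h.fst.snd.memLp_two
  have hY := h.snd.memLp_two
  let π₁ := ContinuousLinearMap.fst ℝ (ℝ × ℝ) ℝ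
  let π₂ := ContinuousLinearMap.snd ℝ (ℝ × ℝ) ℝ
  have hjoint : HasGaussianLaw
      (fun ω => ((regressionResidual P X₁ Y ω, regressionResidual P X₂ Y ω), Y ω)) P :=
    h.map_fun (((ContinuousLinearMap.fst ℝ ℝ ℝ ∘L π₁ - (cov[Y, X₁; P] / Var[Y; P]) • π₂).prod
      (ContinuousLinearMap.snd ℝ ℝ ℝ ∘L π₁ - (cov[Y, X₂; P] / Var[Y; P]) • π₂)).prod π₂)
  refine hjoint.indepFun_of_covariance_strongDual fun L M => ?_
  have hM : M ∘ Y = fun ω => M 1 * Y ω := by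
    ext ω
    rw [Function.comp_apply, mul_comm, ← smul_eq_mul, ← map_smul, smul_eq_mul, mul_one]
  have hL : L ∘ (fun ω => (regressionResidual P X₁ Y ω, regressionResidual P X₂ Y ω))
      = (fun ω => L (1, 0) * regressionResidual P X₁ Y ω)
        + fun ω => L (0, 1) * regressionResidual P X₂ Y ω :=
    funext fun ω => strongDual_real_prod_apply L _ _
  rw [hL, hM, covariance_const_mul_right,
    covariance_add_left ((memLp_regressionResidual hX₁ hY).const_mul _)
      ((memLp_regressionResidual hX₂ hY).const_mul _) hY,
    covariance_const_mul_left, covariance_const_mul_left,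
    covariance_regressionResidual_left hX₁ hY hvar, covariance_regressionResidual_left hX₂ hY hvar,
    mul_zero, mul_zero, add_zero, mul_zero]

theorem covariance_cond_preimage_of_hasGaussianLaw
    (h : HasGaussianLaw (fun ω => ((X₁ ω, X₂ ω), Y ω)) P) (hvar : Var[Y; P] ≠ 0)
    {B : Set ℝ} (hB : MeasurableSet B) (hpos : P (Y ⁻¹' B) ≠ 0) :
    cov[X₁, X₂; P[|Y ⁻¹' B]] = cov[X₁, X₂; P]
      + cov[Y, X₁; P] * cov[Y, X₂; P] / Var[Y; P] * (Var[Y; P[|Y ⁻¹' B]] / Var[Y; P] - 1) := by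
  have := h.isProbabilityMeasure
  have := cond_isProbabilityMeasure hpos
  have hX₁ := h.fst.fst.memLp_two
  have hX₂ := h.fst.snd.memLp_two
  have hY := h.snd.memLp_two
  have hX₁Q := memLp_cond hX₁ hpos
  have hX₂Q := memLp_cond hX₂ hpos
  have hYQ := memLp_cond hY hpos
  have hW₁ := memLp_regressionResidual (P := P) hX₁ hY
  have hW₂ := memLp_regressionResidual (P := P) hX₂ hY
  have hW := hW₁.aemeasurable.prodMk hW₂.aemeasurable
  have hindep := indepFun_regressionResidual_prodMk h hvar
  have hindepQ := indepFun_cond_preimage hindep hW hY.aemeasurable hB hpos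
  have hcovW : cov[regressionResidual P X₁ Y, regressionResidual P X₂ Y; P[|Y ⁻¹' B]]
      = cov[regressionResidual P X₁ Y, regressionResidual P X₂ Y; P] :=
    covariance_eq_of_map_prodMk_eq (hW.mono_ac cond_absolutelyContinuous) hW
      (map_cond_preimage_of_indepFun hindep hW hY.aemeasurable hB hpos)
  rw [covariance_eq_covariance_regressionResidual_add hX₁Q hX₂Q hYQ
      ((hindepQ.comp measurable_fst measurable_id).covariance_eq_zero
        (memLp_cond hW₁ hpos) hYQ)
      ((hindepQ.comp measurable_snd measurable_id).covariance_eq_zero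
        (memLp_cond hW₂ hpos) hYQ),
    covariance_eq_covariance_regressionResidual_add hX₁ hX₂ hY
      (covariance_regressionResidual_left hX₁ hY hvar)
      (covariance_regressionResidual_left hX₂ hY hvar), hcovW]
  field_simp
  ring

end Regression

theorem variance_id_cond_qSet_gaussianReal {a b : ℝ} (ha : 0 ≤ a) (hab : a < b) (hb : b ≤ 1) :
    Var[id; (gaussianReal 0 1)[|qSet (gaussianReal 0 1) a b]]
      = lambdaA2 a b - lambdaA1 a b ^ 2 := by
  have := nullSingletonClass_gaussianReal (μ := 0) one_ne_zero
  have hpos := (measure_qSet_pos (gaussianReal 0 1) ha hab hb).ne'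
  have := cond_isProbabilityMeasure hpos
  exact variance_eq_sub (memLp_cond (memLp_id_gaussianReal 2) hpos)

/-- The affine bijection `x ↦ m + s * x` of the real line for a scale `s > 0`, which carries the
standard normal law to the normal law with mean `m` and standard deviation `s`. -/
def affineOrderIso (m : ℝ) {s : ℝ} (hs : 0 < s) : ℝ ≃o ℝ :=
  (OrderIso.mulLeft₀ s hs).trans (OrderIso.addLeft m)

theorem coe_affineOrderIso (m : ℝ) {s : ℝ} (hs : 0 < s) :
    ⇑(affineOrderIso m hs) = fun x => m + s * x :=
  rfl

theorem map_affineOrderIso_gaussianReal (m : ℝ) {s : ℝ} (hs : 0 < s) :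
    (gaussianReal 0 1).map (affineOrderIso m hs) = gaussianReal m (s ^ 2).toNNReal := by
  have hcomp : ⇑(affineOrderIso m hs) = (m + ·) ∘ (s * ·) := rfl
  rw [hcomp, ← Measure.map_map (by fun_prop) (by fun_prop), gaussianReal_map_const_mul,
    gaussianReal_map_const_add]
  congr 1
  · simp
  · rw [mul_one, Real.toNNReal_of_nonneg (sq_nonneg s)]

theorem variance_map_affineOrderIso (μ : Measure ℝ) [IsProbabilityMeasure μ] (m : ℝ)
    {s : ℝ} (hs : 0 < s) : Var[id; μ.map (affineOrderIso m hs)] = s ^ 2 * Var[id; μ] := by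
  rw [variance_id_map (affineOrderIso m hs).continuous.aemeasurable, coe_affineOrderIso,
    variance_const_add (by fun_prop), variance_const_mul]
  rfl

section Gaussian

variable {Ω : Type*} [MeasurableSpace Ω] {P : Measure Ω} {X₁ X₂ Y : Ω → ℝ}

theorem variance_cond_preimage_qSet_of_hasGaussianLaw (hY : HasGaussianLaw Y P)
    (hvar : 0 < Var[Y; P]) {a b : ℝ} (ha : 0 ≤ a) (hab : a < b) (hb : b ≤ 1) :
    Var[Y; P[|Y ⁻¹' qSet (P.map Y) a b]] = Var[Y; P] * (lambdaA2 a b - lambdaA1 a b ^ 2) := by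
  have := nullSingletonClass_gaussianReal (μ := 0) one_ne_zero
  have := cond_isProbabilityMeasure (measure_qSet_pos (gaussianReal 0 1) ha hab hb).ne'
  have hlaw : P.map Y = (gaussianReal 0 1).map (affineOrderIso P[Y] (Real.sqrt_pos.2 hvar)) := by
    rw [map_affineOrderIso_gaussianReal, Real.sq_sqrt hvar.le, hY.map_eq_gaussianReal]
  rw [← variance_id_map (hY.aemeasurable.mono_ac cond_absolutelyContinuous),
    map_cond_preimage hY.aemeasurable (measurableSet_qSet _ a b), hlaw, cond_qSet_map_orderIso,
    variance_map_affineOrderIso, Real.sq_sqrt hvar.le,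
    variance_id_cond_qSet_gaussianReal ha hab hb]

theorem hasGaussianLaw_prodMk_of_linearCombination
    (h : ∀ c d : ℝ, HasGaussianLaw (fun ω => c * X₁ ω + d * X₂ ω) P) :
    HasGaussianLaw (fun ω => (X₁ ω, X₂ ω)) P := by
  have hX₁ : AEMeasurable X₁ P := by simpa using (h 1 0).aemeasurable
  have hX₂ : AEMeasurable X₂ P := by simpa using (h 0 1).aemeasurable
  refine ⟨⟨fun L => ?_⟩⟩
  have hL : (L ∘ fun ω => (X₁ ω, X₂ ω)) = fun ω => L (1, 0) * X₁ ω + L (0, 1) * X₂ ω :=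
    funext fun ω => strongDual_real_prod_apply L _ _
  rw [AEMeasurable.map_map_of_aemeasurable L.continuous.aemeasurable (hX₁.prodMk hX₂), hL,
    (h _ _).map_eq_gaussianReal, integral_map (hX₁.prodMk hX₂) (by fun_prop),
    variance_map (by fun_prop) (hX₁.prodMk hX₂), hL]
  exact congrArg (gaussianReal · _) (integral_congr_ae (ae_of_all _ (congrFun hL.symm)))

theorem hasGaussianLaw_prodMk_linearCombination (h : HasGaussianLaw (fun ω => (X₁ ω, X₂ ω)) P)
    (α₁ α₂ : ℝ) :
    HasGaussianLaw (fun ω => ((X₁ ω, X₂ ω), α₁ * X₁ ω + α₂ * X₂ ω)) P :=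
  h.map_fun ((ContinuousLinearMap.id ℝ (ℝ × ℝ)).prod
    (α₁ • ContinuousLinearMap.fst ℝ ℝ ℝ + α₂ • ContinuousLinearMap.snd ℝ ℝ ℝ))

theorem covariance_eq_of_forall_map_eq_gaussianReal {μ₁ μ₂ σ₁ σ₂ r : ℝ}
    (h : ∀ c₁ c₂ : ℝ, P.map (fun ω => c₁ * X₁ ω + c₂ * X₂ ω)
      = gaussianReal (c₁ * μ₁ + c₂ * μ₂)
          (Real.toNNReal (c₁ ^ 2 * σ₁ ^ 2 + 2 * c₁ * c₂ * r + c₂ ^ 2 * σ₂ ^ 2))) :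
    cov[X₁, X₂; P] = r := by
  have hlin (c d : ℝ) : HasGaussianLaw (fun ω => c * X₁ ω + d * X₂ ω) P :=
    ⟨by rw [h]; infer_instance⟩
  have hX := hasGaussianLaw_prodMk_of_linearCombination hlin
  have := hX.isProbabilityMeasure
  have hX₁ := hX.fst.memLp_two
  have hX₂ := hX.snd.memLp_two
  have hvar (c d : ℝ) : Var[fun ω => c * X₁ ω + d * X₂ ω; P]
      = max (c ^ 2 * σ₁ ^ 2 + 2 * c * d * r + d ^ 2 * σ₂ ^ 2) 0 := by
    rw [← variance_id_map (hlin c d).aemeasurable, h, variance_id_gaussianReal, Real.coe_toNNReal']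
  have hvar₁ : Var[X₁; P] = σ₁ ^ 2 := by simpa [sq_nonneg] using hvar 1 0
  have hvar₂ : Var[X₂; P] = σ₂ ^ 2 := by simpa [sq_nonneg] using hvar 0 1
  -- `Real.toNNReal` truncates, so only the sum (`0 ≤ r`) or the difference (`r ≤ 0`) reveals `r`.
  rcases le_total 0 r with hr | hr
  · have hadd : Var[X₁ + X₂; P] = σ₁ ^ 2 + 2 * r + σ₂ ^ 2 := by
      simpa [Pi.add_def, show 0 ≤ σ₁ ^ 2 + 2 * r + σ₂ ^ 2 by positivity] using hvar 1 1
    linarith [variance_add hX₁ hX₂]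
  · have hsub : Var[X₁ - X₂; P] = σ₁ ^ 2 - 2 * r + σ₂ ^ 2 := by
      simpa [Pi.sub_def, ← sub_eq_add_neg,
        show 0 ≤ σ₁ ^ 2 - 2 * r + σ₂ ^ 2 by nlinarith] using hvar 1 (-1)
    linarith [variance_sub hX₁ hX₂]

theorem conditional_covariance_bivariate_normal_general
    (h : HasGaussianLaw (fun ω => ((X₁ ω, X₂ ω), Y ω)) P) (hvar : 0 < Var[Y; P])
    {a b : ℝ} (ha : 0 ≤ a) (hab : a < b) (hb : b ≤ 1) :
    cov[X₁, X₂; P[|Y ⁻¹' qSet (P.map Y) a b]]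
      = cov[X₁, X₂; P] + cov[Y, X₁; P] * cov[Y, X₂; P] / Var[Y; P]
          * (lambdaA2 a b - lambdaA1 a b ^ 2 - 1) := by
  have := h.isProbabilityMeasure
  have : NullSingletonClass (P.map Y) := by
    rw [h.snd.map_eq_gaussianReal]
    exact nullSingletonClass_gaussianReal (Real.toNNReal_pos.2 hvar).ne'
  have := Measure.isProbabilityMeasure_map h.snd.aemeasurable
  have hpos : P (Y ⁻¹' qSet (P.map Y) a b) ≠ 0 := by
    rw [← Measure.map_apply_of_aemeasurable h.snd.aemeasurable (measurableSet_qSet _ a b)]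
    exact (measure_qSet_pos _ ha hab hb).ne'
  rw [covariance_cond_preimage_of_hasGaussianLaw h hvar.ne' (measurableSet_qSet _ a b) hpos,
    variance_cond_preimage_qSet_of_hasGaussianLaw h.snd hvar ha hab hb,
    mul_div_cancel_left₀ _ hvar.ne']

end Gaussian

/-- For a bivariate normal `(X₁, X₂)` with non-degenerate benchmark
`Y = α₁X₁ + α₂X₂` and any `0 ≤ a < b ≤ 1` with `A = A(a,b)`:
`Cov[X₁, X₂ | Y ∈ A] = r + (Cov(Y,X₁)·Cov(Y,X₂)/Var Y)·(λ_{A,2} − λ_{A,1}² − 1)`. -/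
theorem conditional_covariance_bivariate_normal
    {Ω : Type*} [MeasureSpace Ω] [IsProbabilityMeasure (ℙ : Measure Ω)]
    (X₁ X₂ : Ω → ℝ) (hX₁ : Measurable X₁) (hX₂ : Measurable X₂)
    (μ₁ μ₂ σ₁ σ₂ r ρ : ℝ) (hσ₁ : 0 < σ₁) (hσ₂ : 0 < σ₂)
    (hρ : ρ = r / (σ₁ * σ₂)) (hρmem : ρ ∈ Set.Ioo (-1 : ℝ) 1)
    (hGauss : ∀ c₁ c₂ : ℝ,
      (ℙ : Measure Ω).map (fun ω => c₁ * X₁ ω + c₂ * X₂ ω)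
        = gaussianReal (c₁ * μ₁ + c₂ * μ₂)
            (Real.toNNReal (c₁ ^ 2 * σ₁ ^ 2 + 2 * c₁ * c₂ * r + c₂ ^ 2 * σ₂ ^ 2)))
    (α₁ α₂ : ℝ) (hα : (α₁, α₂) ≠ (0, 0))
    (Y : Ω → ℝ) (hY : Y = fun ω => α₁ * X₁ ω + α₂ * X₂ ω)
    (hVarYpos : 0 < variance Y ℙ)
    (a b : ℝ) (ha : 0 ≤ a) (hab : a < b) (hb : b ≤ 1)
    (A : Set ℝ) (hA : A = qSet ((ℙ : Measure Ω).map Y) a b) :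
    covar (ℙ[|Y ⁻¹' A]) X₁ X₂
      = r + covar ℙ Y X₁ * covar ℙ Y X₂ / variance Y ℙ
          * (lambdaA2 a b - (lambdaA1 a b) ^ 2 - 1) := by
  subst hY hA
  have hX : HasGaussianLaw (fun ω => (X₁ ω, X₂ ω)) (ℙ : Measure Ω) :=
    hasGaussianLaw_prodMk_of_linearCombination fun c d => ⟨by rw [hGauss]; infer_instance⟩
  rw [← covariance_eq_of_forall_map_eq_gaussianReal hGauss]
  exact conditional_covariance_bivariate_normal_general
    (hasGaussianLaw_prodMk_linearCombination hX α₁ α₂) hVarYpos ha hab hb
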